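/- Let Σ_A(ℕ) be a topologically mixing, finitely primitive (BIP) countable Markov shift, f : Σ_A(ℕ) → ℝ satisfying the Walters condition with Var_1 f < ∞ and P(f) < ∞, and for β > 0 let h_β be the Ruelle eigenfunction of L_{βf}. If β_i → ∞ is a sequence such that (1/β_i) log h_{β_i} converges (uniformly on compact sets) to a function V, then V is a bounded calibrated sub-action for f: V is continuous and bounded, f + V − V∘σ − m(f) ≤ 0 on Σ_A(ℕ), and for every y ∈ Σ_A(ℕ) there exists x ∈ σ^{-1}(y) with f(x) + V(x) − V(σ(x)) − m(f) = 0. -/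

import Mathlib

open Filter Topology MeasureTheory
open scoped ENNReal

/-- The countable Markov shift over alphabet ℕ determined by the 0-1 matrix `A`. -/
def MarkovShift (A : ℕ → ℕ → Bool) : Type :=
  {x : ℕ → ℕ // ∀ i, A (x i) (x (i + 1)) = true}

namespace MarkovShift

variable {A : ℕ → ℕ → Bool}

instance : TopologicalSpace (MarkovShift A) :=
  instTopologicalSpaceSubtype

instance : MeasurableSpace (MarkovShift A) := borel _

instance : BorelSpace (MarkovShift A) := ⟨rfl⟩

/-- The shift map. -/
def shift (x : MarkovShift A) : MarkovShift A :=
  ⟨fun n => x.1 (n + 1), fun i => x.2 (i + 1)⟩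

/-- The cylinder set determined by a finite word. -/
def cylinder (w : List ℕ) : Set (MarkovShift A) :=
  {x | ∀ i : Fin w.length, x.1 i = w.get i}

/-- The cylinder set determined by the first `m` coordinates of `x`. -/
def cylOf (x : MarkovShift A) (m : ℕ) : Set (MarkovShift A) :=
  {y | ∀ i < m, y.1 i = x.1 i}

/-- A symbol is admissible when its cylinder is nonempty. -/
def Admissible (A : ℕ → ℕ → Bool) (a : ℕ) : Prop :=
  ∃ x : MarkovShift A, x.1 0 = a

/-- Topologically mixing. -/
def TopologicallyMixing (A : ℕ → ℕ → Bool) : Prop :=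
  ∀ a b : ℕ, Admissible A a → Admissible A b →
    ∃ N : ℕ, ∀ n ≥ N, ∃ x : MarkovShift A, x.1 0 = a ∧ (shift^[n] x).1 0 = b

/-- Finitely primitive (BIP). -/
def FinitelyPrimitive (A : ℕ → ℕ → Bool) : Prop :=
  ∃ (K₀ : ℕ) (F : Finset ℕ), ∀ a b : ℕ, Admissible A a → Admissible A b →
    ∃ w : List ℕ, w.length = K₀ ∧ (∀ c ∈ w, c ∈ F) ∧
      List.Chain' (fun u v => A u v = true) (a :: (w ++ [b]))

/-- First coordinate where two distinct points disagree. -/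
noncomputable def firstDiff (x y : MarkovShift A) (h : x ≠ y) : ℕ :=
  Nat.find (Function.ne_iff.mp (fun hxy : x.1 = y.1 => h (Subtype.ext hxy)))

open Classical in
/-- The metric `d(x,y) = r^{t(x,y)}`. -/
noncomputable def dist' (r : ℝ) (x y : MarkovShift A) : ℝ :=
  if h : x = y then 0 else r ^ firstDiff x y h

/-- Birkhoff sum `S_n f`. -/
def birkhoff (f : MarkovShift A → ℝ) (n : ℕ) (x : MarkovShift A) : ℝ :=
  ∑ j ∈ Finset.range n, f (shift^[j] x)

/-- The set of values `|S_n f x - S_n f y|` over pairs agreeing on the first `m` coordinates. -/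
def varSet (f : MarkovShift A → ℝ) (n m : ℕ) : Set ℝ :=
  {c | ∃ x y : MarkovShift A, (∀ i < m, x.1 i = y.1 i) ∧ c = |birkhoff f n x - birkhoff f n y|}

/-- `Var_m (S_n f)`. -/
noncomputable def varBirk (f : MarkovShift A → ℝ) (n m : ℕ) : ℝ := sSup (varSet f n m)

/-- `Var_1 f < ∞`. -/
def Var1Finite (f : MarkovShift A → ℝ) : Prop := BddAbove (varSet f 1 1)

/-- The set whose supremum is `sup_{n ≥ 1} Var_{n+k}(S_n f)`. -/
def waltersSet (f : MarkovShift A → ℝ) (k : ℕ) : Set ℝ :=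
  {c | ∃ n, 1 ≤ n ∧ c ∈ varSet f n (n + k)}

/-- `M_k = sup_{n ≥ 1} Var_{n+k}(S_n f)`. -/
noncomputable def waltersSup (f : MarkovShift A → ℝ) (k : ℕ) : ℝ := sSup (waltersSet f k)

/-- The Walters condition. -/
def SatisfiesWalters (f : MarkovShift A → ℝ) : Prop :=
  (∀ k, 1 ≤ k → BddAbove (waltersSet f k)) ∧
    Tendsto (fun k => waltersSup f k) atTop (𝓝 0)

/-- The partition function `Z_n(f,a) = Σ_{σ^n x = x, x₀ = a} e^{S_n f (x)}`. -/
noncomputable def partitionSum (f : MarkovShift A → ℝ) (n : ℕ) (a : ℕ) : ℝ :=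
  ∑' x : {x : MarkovShift A // shift^[n] x = x ∧ x.1 0 = a}, Real.exp (birkhoff f n x.1)

/-- `f` has (finite) Gurevich pressure `p`. -/
def HasGurevichPressure (f : MarkovShift A → ℝ) (p : ℝ) : Prop :=
  ∀ a : ℕ, Admissible A a →
    (∀ n, 1 ≤ n → Summable fun x : {x : MarkovShift A // shift^[n] x = x ∧ x.1 0 = a} =>
        Real.exp (birkhoff f n x.1)) ∧
    Tendsto (fun n : ℕ => (1 / (n : ℝ)) * Real.log (partitionSum f n a)) atTop (𝓝 p)

/-- σ-invariant Borel probability measure. -/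
def IsInvariantProb (μ : Measure (MarkovShift A)) : Prop :=
  IsProbabilityMeasure μ ∧ μ.map shift = μ

/-- `m(f)`, the maximal ergodic average. -/
noncomputable def mf (f : MarkovShift A → ℝ) : ℝ :=
  sSup {c | ∃ μ : Measure (MarkovShift A),
    IsInvariantProb μ ∧ Integrable f μ ∧ ∫ x, f x ∂μ = c}

/-- A maximizing measure for `f`. -/
def IsMaximizing (f : MarkovShift A → ℝ) (μ : Measure (MarkovShift A)) : Prop :=
  IsInvariantProb μ ∧ Integrable f μ ∧ ∫ x, f x ∂μ = mf f

/-- Bounded real valued function. -/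
def BoundedFun (g : MarkovShift A → ℝ) : Prop := ∃ C, ∀ x, |g x| ≤ C

/-- A bounded calibrated sub-action for `f`. -/
def IsCalibratedSubaction (f V : MarkovShift A → ℝ) : Prop :=
  Continuous V ∧ BoundedFun V ∧
    (∀ x, f x + V x - V (shift x) - mf f ≤ 0) ∧
    (∀ y, ∃ x, shift x = y ∧ f x + V x - V (shift x) - mf f = 0)

/-- The Ruelle transfer operator `(L_g u)(x) = Σ_{σ y = x} e^{g(y)} u(y)`. -/
noncomputable def ruelle (g u : MarkovShift A → ℝ) (x : MarkovShift A) : ℝ :=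
  ∑' y : {y : MarkovShift A // shift y = x}, Real.exp (g y.1) * u y.1

/-- Ruelle-Perron-Frobenius data for the potential `f` with pressure `p`:
eigenfunction `h`, eigenmeasure `ν`. -/
def IsRPF (f : MarkovShift A → ℝ) (p : ℝ) (h : MarkovShift A → ℝ)
    (ν : Measure (MarkovShift A)) : Prop :=
  Continuous h ∧ (∀ x, 0 < h x) ∧
    (∀ x, ruelle f h x = Real.exp p * h x) ∧
    IsProbabilityMeasure ν ∧
    (∀ g : MarkovShift A → ℝ, Continuous g → BoundedFun g →
      ∫ x, ruelle f g x ∂ν = Real.exp p * ∫ x, g x ∂ν) ∧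
    ∫ x, h x ∂ν = 1

/-- The Gibbs measure `dμ = h dν`. -/
noncomputable def gibbs (h : MarkovShift A → ℝ) (ν : Measure (MarkovShift A)) :
    Measure (MarkovShift A) :=
  ν.withDensity fun x => ENNReal.ofReal (h x)

/-- The Mañé potential `S_f(x,y)` (with respect to the metric of parameter `r`). -/
noncomputable def manePot (r : ℝ) (f : MarkovShift A → ℝ) (x y : MarkovShift A) : EReal :=
  ⨅ ε : {ε : ℝ // 0 < ε}, ⨆ n : {n : ℕ // 1 ≤ n},
    ⨆ _z : {z : MarkovShift A // dist' r x z < ε.1 ∧ shift^[n.1] z = y},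
      ((birkhoff (fun w => f w - mf f) n.1 _z.1 : ℝ) : EReal)

/-- The (topological) support of a measure. -/
def msupport (μ : Measure (MarkovShift A)) : Set (MarkovShift A) :=
  {x | ∀ U : Set (MarkovShift A), IsOpen U → x ∈ U → 0 < μ U}

end MarkovShift

namespace MarkovShift

/-!
Let `ν` be the eigenmeasure and `h` the eigenfunction of the Ruelle operator `L` of `φ = β f`, with
eigenvalue `e ^ p`. Conformality of `ν` says that `e ^ (-n p) L ^ n` preserves integrals of
nonnegative functions, and it forces `ν` to charge every open set. Approximate `h` from below by
the infima `h_n` of `h` over cylinders of length `n`: the Walters condition compares `L ^ n h_n` at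
points sharing `k` letters up to the factor `exp (waltersSup φ k)`, while the remainder
`e ^ (-n p) L ^ n (h - h_n)` tends to `0` in `L¹(ν)`. Hence `log h` varies by at most
`waltersSup φ k` on `k`-cylinders. Connecting any two points through the finite alphabet of the
primitivity condition bounds the global oscillation of `log h`, and after division by `β` both
bounds are independent of `β`, so they pass to the limit `V`.

Dividing the eigenvalue equation by its right-hand side gives, with `v = β⁻¹ log h`,
`∑_{σ z = y} exp (β (f z + v z - v y - p / β)) = 1`. Each exponent is therefore nonpositive, and the
Laplace principle (dominated by the summable `exp ∘ f` along the fibre) makes some limiting exponent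
vanish: `V` is calibrated for the constant `c = lim p / β`, the limit being taken along an
ultrafilter.

Finally `c = mf f`: integrating the sub-action inequality gives `∫ f dμ ≤ c` for every invariant
`μ`, and closing up long backward calibrated orbits produces periodic orbits whose averages
approach `c`.
-/

variable {A : ℕ → ℕ → Bool} {f φ : MarkovShift A → ℝ}

section Cylinders

lemma shift_iterate_apply (n : ℕ) (x : MarkovShift A) (i : ℕ) :
    (shift^[n] x).1 i = x.1 (i + n) := by
  induction n generalizing x with
  | zero => rfl
  | succ n ih => rw [Function.iterate_succ_apply, ih]; rfl

lemma mem_cylOf_self (x : MarkovShift A) (m : ℕ) : x ∈ cylOf x m := fun _ _ => rfl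

lemma mem_cylOf_symm {x y : MarkovShift A} {m : ℕ} (h : y ∈ cylOf x m) : x ∈ cylOf y m :=
  fun i hi => (h i hi).symm

lemma cylOf_eq_of_mem {x y : MarkovShift A} {m : ℕ} (h : y ∈ cylOf x m) :
    cylOf y m = cylOf x m :=
  Set.ext fun _ => forall₂_congr fun i hi => by rw [h i hi]

lemma cylOf_antitone (x : MarkovShift A) : Antitone (cylOf x) :=
  fun _ _ hmn _ hy i hi => hy i (hi.trans_le hmn)

lemma mem_cylOf_one {x y : MarkovShift A} : y ∈ cylOf x 1 ↔ y.1 0 = x.1 0 := by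
  simp [cylOf]

lemma mem_cylOf_add {x y : MarkovShift A} {n k : ℕ} :
    y ∈ cylOf x (n + k) ↔ y ∈ cylOf x n ∧ shift^[n] y ∈ cylOf (shift^[n] x) k := by
  refine ⟨fun h => ⟨cylOf_antitone x (n.le_add_right k) h, fun i hi => ?_⟩,
    fun ⟨h₁, h₂⟩ i hi => ?_⟩
  · simpa only [shift_iterate_apply] using h (i + n) (by omega)
  · rcases lt_or_ge i n with hin | hin
    · exact h₁ i hin
    · simpa only [shift_iterate_apply, Nat.sub_add_cancel hin] using h₂ (i - n) (by omega)

lemma eq_of_shift_iterate_eq {x y : MarkovShift A} {n : ℕ} (h : y ∈ cylOf x n)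
    (hs : shift^[n] y = shift^[n] x) : y = x := by
  refine Subtype.ext (funext fun i => ?_)
  have hy : y ∈ cylOf x (n + (i + 1)) := mem_cylOf_add.2 ⟨h, hs ▸ mem_cylOf_self _ _⟩
  exact hy i (by omega)

lemma continuous_coord (i : ℕ) : Continuous fun x : MarkovShift A => x.1 i :=
  (continuous_apply i).comp continuous_subtype_val

lemma continuous_shift : Continuous (shift : MarkovShift A → MarkovShift A) :=
  Continuous.subtype_mk (continuous_pi fun i => continuous_coord (i + 1)) _

lemma isOpen_cylOf (x : MarkovShift A) (m : ℕ) : IsOpen (cylOf x m) := by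
  have : cylOf x m = ⋂ i ∈ Finset.range m, (fun y : MarkovShift A => y.1 i) ⁻¹' {x.1 i} := by
    ext y; simp [cylOf]
  rw [this]
  exact isOpen_biInter_finset fun i _ => (isOpen_discrete _).preimage (continuous_coord i)

lemma exists_cylOf_subset {x : MarkovShift A} {U : Set (MarkovShift A)} (hU : U ∈ 𝓝 x) :
    ∃ m, cylOf x m ⊆ U := by
  obtain ⟨t, ht, htU⟩ := (mem_nhds_induced _ _ _).1 hU
  rw [nhds_pi, Filter.mem_pi] at ht
  obtain ⟨I, hI, s, hs, hst⟩ := ht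
  obtain ⟨m, hm⟩ := hI.bddAbove
  refine ⟨m + 1, fun y hy => htU (hst fun i hi => ?_)⟩
  rw [hy i (Nat.lt_succ_of_le (hm hi))]
  exact mem_of_mem_nhds (hs i)

lemma continuous_of_forall_exists_cylOf {g : MarkovShift A → ℝ}
    (hg : ∀ ε > 0, ∃ m, ∀ x, ∀ y ∈ cylOf x m, |g y - g x| < ε) : Continuous g := by
  refine continuous_iff_continuousAt.2 fun x => Metric.tendsto_nhds.2 fun ε hε => ?_
  obtain ⟨m, hm⟩ := hg ε hε
  filter_upwards [(isOpen_cylOf x m).mem_nhds (mem_cylOf_self x m)] with y hy using hm x y hy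

instance : PolishSpace (MarkovShift A) := by
  have hclosed : IsClosed {x : ℕ → ℕ | ∀ i, A (x i) (x (i + 1)) = true} := by
    have hcont : ∀ i, Continuous fun x : ℕ → ℕ => A (x i) (x (i + 1)) := fun i => by
      have hpair : Continuous fun x : ℕ → ℕ => (x i, x (i + 1)) := by fun_prop
      exact (continuous_of_discreteTopology (f := fun p : ℕ × ℕ => A p.1 p.2)).comp hpair
    rw [Set.ofPred_forall]
    exact isClosed_iInter fun i => isClosed_eq (hcont i) continuous_const
  exact hclosed.polishSpace

end Cylinders

section Splicing

lemma exists_shift_eq {a : ℕ} {y : MarkovShift A} (h : A a (y.1 0) = true) :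
    ∃ z : MarkovShift A, z.1 0 = a ∧ shift z = y :=
  ⟨⟨fun i => Nat.casesOn i a y.1, fun i => by
    cases i with
    | zero => exact h
    | succ i => exact y.2 i⟩, rfl, rfl⟩

lemma exists_mem_cylOf_shift_iterate_eq {n : ℕ} {x y : MarkovShift A} (h : x.1 n = y.1 0) :
    ∃ z ∈ cylOf x n, shift^[n] z = y := by
  induction n generalizing x with
  | zero => exact ⟨y, fun i hi => by omega, rfl⟩
  | succ n ih =>
    obtain ⟨z, hz, rfl⟩ := ih (x := shift x) h
    have hz₀ : z.1 0 = x.1 1 := by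
      rcases n.eq_zero_or_pos with rfl | hn
      · exact h.symm
      · exact hz 0 hn
    obtain ⟨w, hw, rfl⟩ := exists_shift_eq (a := x.1 0) (y := z) (hz₀ ▸ x.2 0)
    exact ⟨w, add_comm 1 n ▸ mem_cylOf_add.2 ⟨mem_cylOf_one.2 hw, hz⟩, rfl⟩

lemma exists_shift_iterate_eq_of_isChain {w : List ℕ} {a : ℕ} {y : MarkovShift A}
    (h : List.IsChain (fun u v => A u v = true) (a :: (w ++ [y.1 0]))) :
    ∃ z : MarkovShift A, z.1 0 = a ∧ shift^[w.length + 1] z = y ∧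
      ∀ i < w.length, z.1 (i + 1) ∈ w := by
  induction w generalizing a with
  | nil =>
    obtain ⟨z, hz, hzy⟩ := exists_shift_eq (a := a) (y := y) (by simpa using h)
    exact ⟨z, hz, hzy, by simp⟩
  | cons b w ih =>
    rw [List.cons_append, List.isChain_cons_cons] at h
    obtain ⟨z, rfl, hzy, hzw⟩ := ih h.2
    obtain ⟨z', hz', rfl⟩ := exists_shift_eq h.1
    refine ⟨z', hz', hzy, fun i hi => ?_⟩
    cases i with
    | zero => exact List.mem_cons_self
    | succ i => exact List.mem_cons_of_mem _ (hzw i (by simpa using hi))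

lemma FinitelyPrimitive.exists_link (hA : FinitelyPrimitive A) :
    ∃ (K : ℕ) (F : Finset ℕ), ∀ m, 0 < m → ∀ x y : MarkovShift A,
      ∃ z ∈ cylOf x m, shift^[m + K] z = y ∧ ∀ i < K, (shift^[m] z).1 i ∈ F := by
  obtain ⟨K, F, hKF⟩ := hA
  refine ⟨K, F, fun m hm x y => ?_⟩
  obtain ⟨n, rfl⟩ := Nat.exists_eq_add_of_le' hm
  obtain ⟨w, rfl, hwF, hw⟩ := hKF (x.1 n) (y.1 0)
    ⟨shift^[n] x, by simp [shift_iterate_apply]⟩ ⟨y, rfl⟩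
  obtain ⟨v, hv₀, rfl, hvw⟩ := exists_shift_iterate_eq_of_isChain hw
  obtain ⟨z, hz, rfl⟩ := exists_mem_cylOf_shift_iterate_eq hv₀.symm
  refine ⟨z, mem_cylOf_add.2 ⟨hz, mem_cylOf_one.2 ?_⟩, ?_, fun i hi => hwF _ ?_⟩
  · simpa [shift_iterate_apply] using hv₀
  · rw [← Function.iterate_add_apply]; congr 1; omega
  · simpa only [shift_iterate_apply, add_assoc, add_comm 1 n] using hvw i hi

lemma exists_periodic_of_apply_eq {N : ℕ} (hN : 0 < N) {z : MarkovShift A}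
    (h : z.1 N = z.1 0) : ∃ q ∈ cylOf z (N + 1), shift^[N] q = q := by
  refine ⟨⟨fun i => z.1 (i % N), fun i => ?_⟩, fun i hi => ?_, Subtype.ext (funext fun i => ?_)⟩
  · have hlt := Nat.mod_lt i hN
    have hsucc : z.1 ((i + 1) % N) = z.1 (i % N + 1) := by
      rw [← Nat.mod_add_mod]
      rcases Nat.lt_or_ge (i % N + 1) N with hi | hi
      · rw [Nat.mod_eq_of_lt hi]
      · rw [show i % N + 1 = N by omega, Nat.mod_self, h]
    simpa only [hsucc] using z.2 (i % N)
  · rcases Nat.lt_succ_iff_lt_or_eq.1 hi with hi | rfl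
    · simp [Nat.mod_eq_of_lt hi]
    · simp [h]
  · exact (shift_iterate_apply N _ i).trans (congrArg z.1 (Nat.add_mod_right i N))

end Splicing

section Birkhoff

lemma birkhoff_add (f : MarkovShift A → ℝ) (n m : ℕ) (x : MarkovShift A) :
    birkhoff f (n + m) x = birkhoff f n x + birkhoff f m (shift^[n] x) := by
  simp only [birkhoff, Finset.sum_range_add, ← Function.iterate_add_apply, add_comm]

lemma birkhoff_one (f : MarkovShift A → ℝ) (x : MarkovShift A) : birkhoff f 1 x = f x := by
  simp [birkhoff]

lemma birkhoff_succ (f : MarkovShift A → ℝ) (n : ℕ) (x : MarkovShift A) :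
    birkhoff f (n + 1) x = f x + birkhoff f n (shift x) := by
  rw [add_comm, birkhoff_add, birkhoff_one, Function.iterate_one]

lemma birkhoff_const_mul (f : MarkovShift A → ℝ) (β : ℝ) (n : ℕ) (x : MarkovShift A) :
    birkhoff (fun x => β * f x) n x = β * birkhoff f n x := by
  simp [birkhoff, Finset.mul_sum]

lemma abs_birkhoff_le {n : ℕ} {C : ℝ} {x : MarkovShift A}
    (h : ∀ i < n, |f (shift^[i] x)| ≤ C) : |birkhoff f n x| ≤ n * C := by
  calc |birkhoff f n x| ≤ ∑ i ∈ Finset.range n, |f (shift^[i] x)| :=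
        Finset.abs_sum_le_sum_abs _ _
    _ ≤ (Finset.range n).card • C :=
        Finset.sum_le_card_nsmul _ _ C fun i hi => h i (Finset.mem_range.1 hi)
    _ = n * C := by simp

lemma waltersSup_nonneg (f : MarkovShift A → ℝ) (k : ℕ) : 0 ≤ waltersSup f k := by
  refine Real.sSup_nonneg ?_
  rintro _ ⟨n, -, x, y, -, rfl⟩
  exact abs_nonneg _

lemma SatisfiesWalters.abs_birkhoff_sub_le (hf : SatisfiesWalters f) {n k : ℕ} (hk : 1 ≤ k)
    {x y : MarkovShift A} (h : y ∈ cylOf x (n + k)) :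
    |birkhoff f n y - birkhoff f n x| ≤ waltersSup f k := by
  rcases n.eq_zero_or_pos with rfl | hn
  · simpa [birkhoff] using waltersSup_nonneg f k
  · exact le_csSup (hf.1 k hk) ⟨n, hn, y, x, h, rfl⟩

lemma SatisfiesWalters.exists_waltersSup_lt (hf : SatisfiesWalters f) {ε : ℝ} (hε : 0 < ε) :
    ∃ k, 1 ≤ k ∧ waltersSup f k < ε :=
  ((eventually_ge_atTop 1).and (hf.2.eventually (gt_mem_nhds hε))).exists

lemma SatisfiesWalters.continuous (hf : SatisfiesWalters f) : Continuous f := by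
  refine continuous_of_forall_exists_cylOf fun ε hε => ?_
  obtain ⟨k, hk, hkε⟩ := hf.exists_waltersSup_lt hε
  refine ⟨1 + k, fun x y hy => ?_⟩
  simpa only [birkhoff_one] using (hf.abs_birkhoff_sub_le hk hy).trans_lt hkε

lemma waltersSet_const_mul (f : MarkovShift A → ℝ) {β : ℝ} (hβ : 0 ≤ β) (k : ℕ) :
    waltersSet (fun x => β * f x) k = (β * ·) '' waltersSet f k := by
  have hscale : ∀ n x y, |birkhoff (fun x => β * f x) n x - birkhoff (fun x => β * f x) n y| =
      β * |birkhoff f n x - birkhoff f n y| := fun n x y => by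
    rw [birkhoff_const_mul, birkhoff_const_mul, ← mul_sub, abs_mul, abs_of_nonneg hβ]
  ext c
  constructor
  · rintro ⟨n, hn, x, y, hxy, rfl⟩
    exact ⟨_, ⟨n, hn, x, y, hxy, rfl⟩, (hscale n x y).symm⟩
  · rintro ⟨_, ⟨n, hn, x, y, hxy, rfl⟩, rfl⟩
    exact ⟨n, hn, x, y, hxy, (hscale n x y).symm⟩

lemma waltersSup_const_mul (f : MarkovShift A → ℝ) {β : ℝ} (hβ : 0 ≤ β) (k : ℕ) :
    waltersSup (fun x => β * f x) k = β * waltersSup f k := by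
  rw [waltersSup, waltersSet_const_mul f hβ]
  exact Real.sSup_smul_of_nonneg hβ (waltersSet f k)

lemma SatisfiesWalters.const_mul (hf : SatisfiesWalters f) {β : ℝ} (hβ : 0 ≤ β) :
    SatisfiesWalters fun x => β * f x := by
  refine ⟨fun k hk => ?_, ?_⟩
  · rw [waltersSet_const_mul f hβ]
    exact (monotone_mul_left_of_nonneg hβ).map_bddAbove (hf.1 k hk)
  · simpa only [waltersSup_const_mul f hβ, mul_zero] using hf.2.const_mul β

lemma Var1Finite.abs_sub_le (hf : Var1Finite f) {x y : MarkovShift A} (h : y ∈ cylOf x 1) :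
    |f y - f x| ≤ varBirk f 1 1 :=
  le_csSup hf ⟨y, x, h, by simp only [birkhoff_one]⟩

lemma Var1Finite.exists_abs_le (hf : Var1Finite f) (F : Finset ℕ) :
    ∃ C, ∀ x : MarkovShift A, x.1 0 ∈ F → |f x| ≤ C := by
  have hletter : ∀ a, ∃ C, ∀ x : MarkovShift A, x.1 0 = a → |f x| ≤ C := fun a => by
    by_cases ha : Admissible A a
    · obtain ⟨y, rfl⟩ := ha
      refine ⟨|f y| + varBirk f 1 1, fun x hx => ?_⟩
      linarith [hf.abs_sub_le (mem_cylOf_one.2 hx), abs_sub_abs_le_abs_sub (f x) (f y)]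
    · exact ⟨0, fun x hx => absurd ⟨x, hx⟩ ha⟩
  choose C hC using hletter
  obtain ⟨M, hM⟩ := (F.image C).exists_le
  exact ⟨M, fun x hx => (hC _ x rfl).trans (hM _ (Finset.mem_image_of_mem C hx))⟩

end Birkhoff

section Specification

/-- Quantitative specification: after following `m` letters of an arbitrary point one can move to
an arbitrary target in `K` further steps, losing at most `C` in the Birkhoff sum of `f`. -/
def HasSpecification (f : MarkovShift A → ℝ) (K : ℕ) (C : ℝ) : Prop :=
  ∀ m, 0 < m → ∀ x y : MarkovShift A, ∃ z ∈ cylOf x m, shift^[m + K] z = y ∧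
    birkhoff f m x ≤ birkhoff f (m + K) z + C

variable {K : ℕ} {C : ℝ}

lemma FinitelyPrimitive.exists_hasSpecification (hA : FinitelyPrimitive A)
    (hW : SatisfiesWalters f) (hV : Var1Finite f) : ∃ K C, HasSpecification f K C := by
  obtain ⟨K, F, hlink⟩ := hA.exists_link
  obtain ⟨D, hD⟩ := hV.exists_abs_le F
  refine ⟨K, waltersSup f 1 + varBirk f 1 1 + K * D, fun m hm x y => ?_⟩
  obtain ⟨z, hz, hzy, hzF⟩ := hlink m hm x y
  refine ⟨z, hz, hzy, ?_⟩
  have hfree : |birkhoff f K (shift^[m] z)| ≤ K * D := abs_birkhoff_le fun i hi => hD _ <| by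
    rw [shift_iterate_apply, zero_add]
    exact hzF i hi
  obtain ⟨n, rfl⟩ := Nat.exists_eq_add_of_le' hm
  have hhead := hW.abs_birkhoff_sub_le le_rfl hz
  have hlast := hV.abs_sub_le (mem_cylOf_add.1 hz).2
  rw [birkhoff_add f (n + 1), birkhoff_add, birkhoff_add, birkhoff_one, birkhoff_one]
  rw [abs_le] at hfree hhead hlast
  linarith

lemma HasSpecification.const_mul (hf : HasSpecification f K C) {β : ℝ} (hβ : 0 ≤ β) :
    HasSpecification (fun x => β * f x) K (β * C) := fun m hm x y => by
  obtain ⟨z, hz, hzy, hle⟩ := hf m hm x y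
  refine ⟨z, hz, hzy, ?_⟩
  rw [birkhoff_const_mul, birkhoff_const_mul, ← mul_add]
  exact mul_le_mul_of_nonneg_left hle hβ

lemma HasSpecification.exists_periodic (hf : HasSpecification f K C) (hW : SatisfiesWalters f)
    {m : ℕ} (hm : 0 < m) (x : MarkovShift A) :
    ∃ q ∈ cylOf x m, shift^[m + K] q = q ∧
      birkhoff f m x ≤ birkhoff f (m + K) q + (C + waltersSup f 1) := by
  obtain ⟨z, hz, hzx, hle⟩ := hf m hm x x
  have hclose : z.1 (m + K) = z.1 0 := by
    have := shift_iterate_apply (m + K) z 0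
    rw [hzx, zero_add] at this
    rw [← this, hz 0 hm]
  obtain ⟨q, hq, hqper⟩ := exists_periodic_of_apply_eq (by omega) hclose
  refine ⟨q, cylOf_eq_of_mem hz ▸ cylOf_antitone z (by omega) hq, hqper, ?_⟩
  linarith [abs_le.1 (hW.abs_birkhoff_sub_le le_rfl hq)]

variable (A) in
/-- Every nonempty open set is eventually mapped onto the whole space (the shift is locally
eventually onto). -/
def TopologicallyExact : Prop :=
  ∀ U : Set (MarkovShift A), IsOpen U → U.Nonempty → ∃ n, shift^[n] '' U = Set.univ

lemma HasSpecification.topologicallyExact (hf : HasSpecification f K C) :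
    TopologicallyExact A := by
  rintro U hU ⟨x, hx⟩
  obtain ⟨m, hm⟩ := exists_cylOf_subset (hU.mem_nhds hx)
  refine ⟨m + 1 + K, Set.eq_univ_of_forall fun y => ?_⟩
  obtain ⟨z, hz, hzy, -⟩ := hf (m + 1) m.succ_pos x y
  exact ⟨z, hm (cylOf_antitone x m.le_succ hz), hzy⟩

end Specification

section TransferOperator

/-- The exponential with values in `ℝ≥0∞`, the scalars of the transfer operator below. -/
noncomputable def ennexp (t : ℝ) : ℝ≥0∞ := ENNReal.ofReal (Real.exp t)

lemma ennexp_zero : ennexp 0 = 1 := by simp [ennexp]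

lemma ennexp_add (s t : ℝ) : ennexp (s + t) = ennexp s * ennexp t := by
  rw [ennexp, Real.exp_add, ENNReal.ofReal_mul (Real.exp_nonneg s), ennexp, ennexp]

lemma ennexp_pow (t : ℝ) (n : ℕ) : ennexp t ^ n = ennexp (n * t) := by
  rw [ennexp, ennexp, ← ENNReal.ofReal_pow (Real.exp_nonneg t), Real.exp_nat_mul]

lemma ennexp_le_ennexp {s t : ℝ} : ennexp s ≤ ennexp t ↔ s ≤ t := by
  rw [ennexp, ennexp, ENNReal.ofReal_le_ofReal_iff (Real.exp_nonneg t), Real.exp_le_exp]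

lemma ennexp_ne_zero (t : ℝ) : ennexp t ≠ 0 := by simp [ennexp, Real.exp_pos]

lemma ennexp_ne_top (t : ℝ) : ennexp t ≠ ∞ := ENNReal.ofReal_ne_top

lemma ennexp_log {t : ℝ} (ht : 0 < t) : ennexp (Real.log t) = ENNReal.ofReal t := by
  rw [ennexp, Real.exp_log ht]

lemma ennreal_tsum_le_mul_tsum_of_injective {ι κ : Type*} {T : ι → κ} (hT : T.Injective)
    {a : ι → ℝ≥0∞} {b : κ → ℝ≥0∞} {c : ℝ≥0∞} (h : ∀ i, a i ≤ c * b (T i)) :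
    ∑' i, a i ≤ c * ∑' j, b j :=
  calc ∑' i, a i ≤ ∑' i, c * b (T i) := ENNReal.tsum_le_tsum h
    _ = c * ∑' i, b (T i) := ENNReal.tsum_mul_left
    _ ≤ c * ∑' j, b j := by gcongr; exact ENNReal.tsum_comp_le_tsum_of_injective hT b

/-- The `n`-th power of the Ruelle operator, acting on functions with values in `ℝ≥0∞` so that it
is defined without any summability assumption. -/
noncomputable def transfer (φ : MarkovShift A → ℝ) (n : ℕ) (u : MarkovShift A → ℝ≥0∞)
    (x : MarkovShift A) : ℝ≥0∞ :=
  ∑' z : {z : MarkovShift A // shift^[n] z = x}, ennexp (birkhoff φ n z.1) * u z.1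

lemma transfer_one_apply (φ : MarkovShift A → ℝ) (u : MarkovShift A → ℝ≥0∞)
    (x : MarkovShift A) :
    transfer φ 1 u x = ∑' z : {z : MarkovShift A // shift z = x}, ennexp (φ z.1) * u z.1 :=
  tsum_congr fun z => by rw [birkhoff_one]

lemma transfer_zero (φ : MarkovShift A → ℝ) (u : MarkovShift A → ℝ≥0∞) :
    transfer φ 0 u = u := by
  funext x
  refine (tsum_eq_single ⟨x, rfl⟩ fun z hz => absurd (Subtype.ext z.2) hz).trans ?_
  simp [birkhoff, ennexp_zero]

/-- A point of an `(n + 1)`-step fibre of the shift, recorded together with its image. -/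
def fiberEquiv (n : ℕ) (x : MarkovShift A) :
    (Σ y : {y : MarkovShift A // shift^[n] y = x}, {z : MarkovShift A // shift z = y.1}) ≃
      {z : MarkovShift A // shift^[n + 1] z = x} where
  toFun q := ⟨q.2.1, by rw [Function.iterate_succ_apply, q.2.2, q.1.2]⟩
  invFun z := ⟨⟨shift z.1, z.2⟩, ⟨z.1, rfl⟩⟩
  left_inv := by rintro ⟨⟨y, hy⟩, z, rfl : shift z = y⟩; rfl
  right_inv _ := rfl

lemma transfer_succ (φ : MarkovShift A → ℝ) (n : ℕ) (u : MarkovShift A → ℝ≥0∞) :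
    transfer φ (n + 1) u = transfer φ n (transfer φ 1 u) := by
  funext x
  rw [transfer, ← (fiberEquiv n x).tsum_eq, ENNReal.tsum_sigma']
  refine tsum_congr fun y => ?_
  rw [transfer_one_apply, ← ENNReal.tsum_mul_left]
  refine tsum_congr fun z => ?_
  change ennexp (birkhoff φ (n + 1) z.1) * u z.1 = _
  rw [birkhoff_succ, z.2, add_comm, ennexp_add, mul_assoc]

lemma transfer_mono (φ : MarkovShift A → ℝ) (n : ℕ) : Monotone (transfer φ n) :=
  fun _ _ huv _ => ENNReal.tsum_le_tsum fun z => mul_le_mul_right (huv z.1) _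

lemma transfer_add (φ : MarkovShift A → ℝ) (n : ℕ) (u v : MarkovShift A → ℝ≥0∞) :
    transfer φ n (u + v) = transfer φ n u + transfer φ n v := by
  funext x
  simp only [transfer, Pi.add_apply, mul_add, ENNReal.tsum_add]

lemma transfer_smul (φ : MarkovShift A → ℝ) (n : ℕ) (c : ℝ≥0∞) (u : MarkovShift A → ℝ≥0∞) :
    transfer φ n (c • u) = c • transfer φ n u := by
  funext x
  simp only [transfer, Pi.smul_apply, smul_eq_mul, ← ENNReal.tsum_mul_left, mul_left_comm]

lemma transfer_eq_pow_smul {φ : MarkovShift A → ℝ} {H : MarkovShift A → ℝ≥0∞} {c : ℝ≥0∞}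
    (hH : transfer φ 1 H = c • H) (n : ℕ) : transfer φ n H = c ^ n • H := by
  induction n with
  | zero => rw [transfer_zero, pow_zero, one_smul]
  | succ n ih => rw [transfer_succ, hH, transfer_smul, ih, smul_smul, pow_succ']

lemma mul_le_transfer (φ : MarkovShift A → ℝ) (n : ℕ) (u : MarkovShift A → ℝ≥0∞)
    (z : MarkovShift A) : ennexp (birkhoff φ n z) * u z ≤ transfer φ n u (shift^[n] z) :=
  ENNReal.le_tsum (f := fun z' : {z' : MarkovShift A // shift^[n] z' = shift^[n] z} =>
    ennexp (birkhoff φ n z'.1) * u z'.1) ⟨z, rfl⟩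

lemma injective_apply_zero_fiber (x : MarkovShift A) :
    Function.Injective fun z : {z : MarkovShift A // shift z = x} => z.1.1 0 :=
  fun z z' h => Subtype.ext <| eq_of_shift_iterate_eq (n := 1) (mem_cylOf_one.2 h) <| by
    rw [Function.iterate_one, z.2, z'.2]

variable (A) in
lemma measurableEmbedding_shift_restrict (b : ℕ) :
    MeasurableEmbedding fun z : {z : MarkovShift A // z.1 0 = b} => shift z.1 := by
  have hopen : IsOpen {z : MarkovShift A | z.1 0 = b} :=
    (isOpen_discrete {b}).preimage (continuous_coord 0)
  have : StandardBorelSpace {z : MarkovShift A // z.1 0 = b} :=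
    hopen.measurableSet.standardBorel
  refine (continuous_shift.measurable.comp measurable_subtype_coe).measurableEmbedding
    fun z z' h => Subtype.ext ?_
  exact eq_of_shift_iterate_eq (n := 1) (mem_cylOf_one.2 (z.2.trans z'.2.symm)) h

lemma transfer_one_eq_tsum_extend (φ : MarkovShift A → ℝ) (u : MarkovShift A → ℝ≥0∞)
    (x : MarkovShift A) :
    transfer φ 1 u x = ∑' b : ℕ, Function.extend
      (fun z : {z : MarkovShift A // z.1 0 = b} => shift z.1)
      (fun z => ennexp (φ z.1) * u z.1) 0 x := by
  rw [transfer_one_apply, ← (injective_apply_zero_fiber x).tsum_eq fun b hb => ?_]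
  · refine tsum_congr fun ⟨z, hz⟩ => ?_
    subst hz
    exact ((measurableEmbedding_shift_restrict A (z.1 0)).injective.extend_apply
      (fun z => ennexp (φ z.1) * u z.1) 0 ⟨z, rfl⟩).symm
  · by_contra hne
    refine hb (Function.extend_apply' _ _ _ ?_)
    rintro ⟨⟨z, rfl⟩, hz⟩
    exact hne ⟨⟨z, hz⟩, rfl⟩

lemma measurable_transfer (hφ : Measurable φ) (n : ℕ) {u : MarkovShift A → ℝ≥0∞}
    (hu : Measurable u) : Measurable (transfer φ n u) := by
  induction n generalizing u with
  | zero => rwa [transfer_zero]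
  | succ n ih =>
    rw [transfer_succ]
    refine ih ?_
    simp only [funext (transfer_one_eq_tsum_extend φ u)]
    refine Measurable.tsum fun b => (measurableEmbedding_shift_restrict A b).measurable_extend
      ?_ measurable_const
    exact ((ENNReal.measurable_ofReal.comp hφ.exp).mul hu).comp measurable_subtype_coe

end TransferOperator

section Conformal

/-- The measure `∑_{σ z = x} e^{φ z} δ_z`: integrating against it is applying the Ruelle
operator. -/
noncomputable def transferMeasure (φ : MarkovShift A → ℝ) (x : MarkovShift A) :
    Measure (MarkovShift A) :=
  Measure.sum fun z : {z : MarkovShift A // shift z = x} => ennexp (φ z.1) • Measure.dirac z.1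

/-- `ν` is an eigenmeasure of the dual Ruelle operator with eigenvalue `e ^ p`, expressed on
functions with values in `ℝ≥0∞`. -/
def IsConformal (φ : MarkovShift A → ℝ) (p : ℝ) (ν : Measure (MarkovShift A)) : Prop :=
  ∀ u : MarkovShift A → ℝ≥0∞, Measurable u →
    ∫⁻ x, transfer φ 1 u x ∂ν = ennexp p * ∫⁻ x, u x ∂ν

variable {p s : ℝ} {h : MarkovShift A → ℝ} {ν : Measure (MarkovShift A)}
  {u : MarkovShift A → ℝ≥0∞}

lemma lintegral_transferMeasure (φ : MarkovShift A → ℝ) (x : MarkovShift A) (hu : Measurable u) :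
    ∫⁻ y, u y ∂transferMeasure φ x = transfer φ 1 u x := by
  simp only [transferMeasure, lintegral_sum_measure, lintegral_smul_measure,
    lintegral_dirac' _ hu, transfer_one_apply, smul_eq_mul]

lemma measurable_transferMeasure (hφ : Measurable φ) : Measurable (transferMeasure φ) := by
  refine Measure.measurable_of_measurable_coe _ fun t ht => ?_
  have hone : Measurable (t.indicator (1 : MarkovShift A → ℝ≥0∞)) := measurable_one.indicator ht
  simp only [← lintegral_indicator_one ht, lintegral_transferMeasure φ _ hone]
  exact measurable_transfer hφ 1 hone

lemma lintegral_bind_transferMeasure (hφ : Measurable φ) (ν : Measure (MarkovShift A))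
    (hu : Measurable u) :
    ∫⁻ x, u x ∂ν.bind (transferMeasure φ) = ∫⁻ x, transfer φ 1 u x ∂ν := by
  rw [Measure.lintegral_bind (measurable_transferMeasure hφ).aemeasurable hu.aemeasurable]
  exact lintegral_congr fun x => lintegral_transferMeasure φ x hu

lemma ruelle_eq_toReal_transfer (φ : MarkovShift A → ℝ) (g : MarkovShift A → NNReal)
    (x : MarkovShift A) :
    ruelle φ (fun y => g y) x = (transfer φ 1 (fun y => g y) x).toReal := by
  rw [ruelle, transfer_one_apply, ENNReal.tsum_toReal_eq
    fun z => ENNReal.mul_ne_top (ennexp_ne_top _) ENNReal.coe_ne_top]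
  simp [ennexp, Real.exp_nonneg]

lemma transfer_one_le_mul {c : ℝ≥0∞} (hs : ∀ x, transfer φ 1 1 x ≤ ennexp s)
    (hu : ∀ x, u x ≤ c) (x : MarkovShift A) : transfer φ 1 u x ≤ c * ennexp s :=
  calc transfer φ 1 u x ≤ transfer φ 1 (c • 1) x :=
        transfer_mono φ 1 (fun y => by simpa using hu y) x
    _ = c * transfer φ 1 1 x := by rw [transfer_smul]; rfl
    _ ≤ c * ennexp s := by gcongr; exact hs x

lemma IsRPF.lintegral_transfer_boundedContinuous (hR : IsRPF φ p h ν) (hφ : Measurable φ)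
    (hs : ∀ x, transfer φ 1 1 x ≤ ennexp s) (g : BoundedContinuousFunction (MarkovShift A) NNReal) :
    ∫⁻ x, transfer φ 1 (fun y => g y) x ∂ν = ennexp p * ∫⁻ x, g x ∂ν := by
  obtain ⟨-, -, -, hν, hdual, -⟩ := hR
  have hg : Measurable fun x => (g x : ℝ≥0∞) := g.continuous.measurable.coe_nnreal_ennreal
  have hgle : ∀ x, (g x : ℝ≥0∞) ≤ nndist g 0 := fun x =>
    ENNReal.coe_le_coe.2 (BoundedContinuousFunction.NNReal.upper_bound g x)
  have htop : ENNReal.ofNNReal (nndist g 0) * ennexp s < ∞ :=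
    ENNReal.mul_lt_top ENNReal.coe_lt_top (ennexp_ne_top s).lt_top
  have hTle := transfer_one_le_mul hs hgle
  have hreal := hdual (fun x => g x) (NNReal.continuous_coe.comp g.continuous)
    ⟨nndist g 0, fun x => by
      rw [NNReal.abs_eq]
      exact NNReal.coe_le_coe.2 (BoundedContinuousFunction.NNReal.upper_bound g x)⟩
  simp only [ruelle_eq_toReal_transfer] at hreal
  rw [integral_toReal (measurable_transfer hφ 1 hg).aemeasurable
    (ae_of_all _ fun x => (hTle x).trans_lt htop)] at hreal
  have hgreal : ∫ x, (g x : ℝ) ∂ν = (∫⁻ x, g x ∂ν).toReal :=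
    integral_toReal hg.aemeasurable (ae_of_all _ fun _ => ENNReal.coe_lt_top)
  have hTfin : ∫⁻ x, transfer φ 1 (fun y => g y) x ∂ν ≠ ∞ :=
    ((lintegral_mono hTle).trans_lt (by rwa [lintegral_const, measure_univ, mul_one])).ne
  have hgfin : ∫⁻ x, g x ∂ν ≠ ∞ := ((lintegral_mono hgle).trans_lt
    (by rw [lintegral_const, measure_univ, mul_one]; exact ENNReal.coe_lt_top)).ne
  rw [← ENNReal.ofReal_toReal hTfin, hreal, hgreal, ENNReal.ofReal_mul (Real.exp_nonneg p),
    ENNReal.ofReal_toReal hgfin, ennexp]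

lemma IsRPF.isConformal (hR : IsRPF φ p h ν) (hφ : Measurable φ)
    (hs : ∀ x, transfer φ 1 1 x ≤ ennexp s) : IsConformal φ p ν := by
  have hν : IsProbabilityMeasure ν := hR.2.2.2.1
  have hfin : IsFiniteMeasure (ν.bind (transferMeasure φ)) := by
    refine ⟨?_⟩
    rw [← lintegral_one]
    refine (lintegral_bind_transferMeasure hφ ν measurable_const).trans_lt ?_
    exact (lintegral_mono hs).trans_lt (by simp [(ennexp_ne_top s).lt_top])
  have : IsFiniteMeasure (ennexp p • ν) := ν.smul_finite (ennexp_ne_top p)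
  have hbind : ν.bind (transferMeasure φ) = ennexp p • ν := by
    refine ext_of_forall_lintegral_eq_of_IsFiniteMeasure fun g => ?_
    rw [lintegral_bind_transferMeasure hφ ν g.continuous.measurable.coe_nnreal_ennreal,
      hR.lintegral_transfer_boundedContinuous hφ hs, lintegral_smul_measure, smul_eq_mul]
  intro u hu
  rw [← lintegral_bind_transferMeasure hφ ν hu, hbind, lintegral_smul_measure, smul_eq_mul]

lemma IsConformal.lintegral_transfer (hν : IsConformal φ p ν) (hφ : Measurable φ) (n : ℕ)
    (hu : Measurable u) :
    ∫⁻ x, transfer φ n u x ∂ν = ennexp p ^ n * ∫⁻ x, u x ∂ν := by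
  induction n generalizing u with
  | zero => rw [transfer_zero, pow_zero, one_mul]
  | succ n ih =>
    rw [transfer_succ, ih (measurable_transfer hφ 1 hu), hν u hu, pow_succ, mul_assoc]

lemma IsConformal.le_of_transfer_one_le (hν : IsConformal φ p ν) [IsProbabilityMeasure ν]
    (hs : ∀ x, transfer φ 1 1 x ≤ ennexp s) : p ≤ s := by
  rw [← ennexp_le_ennexp]
  calc ennexp p = ∫⁻ x, transfer φ 1 1 x ∂ν := by simp [hν 1 measurable_one]
    _ ≤ ∫⁻ _, ennexp s ∂ν := lintegral_mono hs
    _ = ennexp s := by simp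

lemma IsConformal.isOpenPosMeasure (hν : IsConformal φ p ν) (hφ : Measurable φ)
    (hA : TopologicallyExact A) (hν₀ : ν ≠ 0) : ν.IsOpenPosMeasure := by
  refine ⟨fun U hU hne hνU => hν₀ ?_⟩
  obtain ⟨n, hn⟩ := hA U hU hne
  have hone : Measurable (U.indicator (1 : MarkovShift A → ℝ≥0∞)) :=
    measurable_one.indicator hU.measurableSet
  have hzero := hν.lintegral_transfer hφ n hone
  rw [lintegral_indicator_one hU.measurableSet, hνU, mul_zero,
    lintegral_eq_zero_iff (measurable_transfer hφ n hone)] at hzero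
  refine ae_eq_bot.1 (Filter.eventually_false_iff_eq_bot.1 ?_)
  filter_upwards [hzero] with x hx
  obtain ⟨z, hz, rfl⟩ : x ∈ shift^[n] '' U := hn ▸ Set.mem_univ x
  have hpos := mul_le_transfer φ n (U.indicator 1) z
  rw [hx, Set.indicator_of_mem hz] at hpos
  simp [ennexp_ne_zero] at hpos

end Conformal

section OperatorBound

variable {K : ℕ} {C s : ℝ}

lemma exists_le_ennexp {b : ℝ≥0∞} (hb : b ≠ ∞) : ∃ s, b ≤ ennexp s := by
  refine ⟨b.toReal, (ENNReal.le_ofReal_iff_toReal_le hb (Real.exp_nonneg _)).2 ?_⟩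
  linarith [Real.add_one_le_exp b.toReal]

lemma HasSpecification.exists_periodic_through (hf : HasSpecification f K C)
    (hW : SatisfiesWalters f) (o z : MarkovShift A) :
    ∃ q, shift^[K + 2 + K] q = q ∧ q.1 0 = o.1 0 ∧ q.1 (K + 1) = z.1 0 ∧
      f z ≤ 2 * C + waltersSup f 1 - f o + birkhoff f (K + 2 + K) q := by
  obtain ⟨x, hx, rfl, hox⟩ := hf 1 one_pos o z
  obtain ⟨q, hq, hqper, hxq⟩ := hf.exists_periodic hW (m := K + 2) (by omega) x
  refine ⟨q, hqper, ?_, ?_, ?_⟩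
  · rw [hq 0 (by omega), hx 0 one_pos]
  · rw [hq (K + 1) (by omega), shift_iterate_apply]
    exact congrArg x.1 (by omega)
  · rw [show K + 2 = 1 + K + 1 by omega, birkhoff_add, birkhoff_one] at hxq
    rw [birkhoff_one] at hox
    rw [show K + 2 = 1 + K + 1 by omega]
    linarith

lemma HasSpecification.exists_transfer_one_le (hf : HasSpecification f K C)
    (hW : SatisfiesWalters f) (o : MarkovShift A)
    (hsum : Summable fun x : {x : MarkovShift A // shift^[K + 2 + K] x = x ∧ x.1 0 = o.1 0} =>
      Real.exp (birkhoff f (K + 2 + K) x.1)) :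
    ∃ s, ∀ x, transfer f 1 1 x ≤ ennexp s := by
  obtain ⟨s, hs⟩ := exists_le_ennexp (b := ennexp (2 * C + waltersSup f 1 - f o) *
    ∑' x : {x : MarkovShift A // shift^[K + 2 + K] x = x ∧ x.1 0 = o.1 0},
      ennexp (birkhoff f (K + 2 + K) x.1))
    (ENNReal.mul_ne_top (ennexp_ne_top _) hsum.tsum_ofReal_ne_top)
  refine ⟨s, fun x => le_trans ?_ hs⟩
  choose q hqper hq₀ hqz hqle using hf.exists_periodic_through hW o
  rw [transfer_one_apply]
  refine ennreal_tsum_le_mul_tsum_of_injective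
    (T := fun z => ⟨q z.1, hqper z.1, hq₀ z.1⟩) (fun z z' hzz' => ?_) fun z => ?_
  · have hletter : (q z.1).1 (K + 1) = (q z'.1).1 (K + 1) := congrArg (fun r => r.1.1 (K + 1)) hzz'
    exact injective_apply_zero_fiber x ((hqz z.1).symm.trans (hletter.trans (hqz z'.1)))
  · rw [Pi.one_apply, mul_one, ← ennexp_add]
    exact ennexp_le_ennexp.2 (hqle z.1)

lemma le_of_transfer_one_le (hs : ∀ x, transfer f 1 1 x ≤ ennexp s) (x : MarkovShift A) :
    f x ≤ s := by
  have := (mul_le_transfer f 1 1 x).trans (hs _)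
  rwa [birkhoff_one, Pi.one_apply, mul_one, ennexp_le_ennexp] at this

lemma transfer_const_mul_one_le (hs : ∀ x, transfer f 1 1 x ≤ ennexp s) {β : ℝ} (hβ : 1 ≤ β)
    (x : MarkovShift A) : transfer (fun x => β * f x) 1 1 x ≤ ennexp (β * s) := by
  have hterm : ∀ z, β * f z ≤ (β - 1) * s + f z := fun z => by
    linarith [mul_le_mul_of_nonneg_left (le_of_transfer_one_le hs z) (sub_nonneg.2 hβ)]
  calc transfer (fun x => β * f x) 1 1 x ≤ ennexp ((β - 1) * s) * transfer f 1 1 x := by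
        rw [transfer_one_apply, transfer_one_apply]
        refine ennreal_tsum_le_mul_tsum_of_injective Function.injective_id fun z => ?_
        simpa [← ennexp_add, ennexp_le_ennexp] using hterm z
    _ ≤ ennexp ((β - 1) * s) * ennexp s := by gcongr; exact hs x
    _ = ennexp (β * s) := by rw [← ennexp_add]; ring_nf

end OperatorBound

section CylinderInfimum

/-- The best lower approximation of `H` that only depends on the first `m` coordinates. -/
noncomputable def cylInf (H : MarkovShift A → ℝ≥0∞) (m : ℕ) (x : MarkovShift A) : ℝ≥0∞ :=
  ⨅ y ∈ cylOf x m, H y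

variable {H : MarkovShift A → ℝ≥0∞}

lemma cylInf_le (H : MarkovShift A → ℝ≥0∞) (m : ℕ) : cylInf H m ≤ H :=
  fun x => iInf₂_le x (mem_cylOf_self x m)

lemma cylInf_eq_of_mem (H : MarkovShift A → ℝ≥0∞) {m : ℕ} {x y : MarkovShift A}
    (h : y ∈ cylOf x m) : cylInf H m y = cylInf H m x := by
  rw [cylInf, cylOf_eq_of_mem h, cylInf]

lemma measurable_cylInf (H : MarkovShift A → ℝ≥0∞) (m : ℕ) : Measurable (cylInf H m) := by
  have hloc : IsLocallyConstant (cylInf H m) := (IsLocallyConstant.iff_exists_open _).2 fun x =>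
    ⟨cylOf x m, isOpen_cylOf x m, mem_cylOf_self x m, fun _ hy => cylInf_eq_of_mem H hy⟩
  exact hloc.continuous.measurable

lemma tendsto_cylInf (hH : LowerSemicontinuous H) (x : MarkovShift A) :
    Tendsto (fun m => cylInf H m x) atTop (𝓝 (H x)) := by
  refine tendsto_order.2 ⟨fun a ha => ?_,
    fun a ha => Eventually.of_forall fun m => (cylInf_le H m x).trans_lt ha⟩
  obtain ⟨b, hab, hb⟩ := exists_between ha
  obtain ⟨m, hm⟩ := exists_cylOf_subset (hH x b hb)
  filter_upwards [eventually_ge_atTop m] with n hn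
  exact hab.trans_le (le_iInf₂ fun y hy => (hm (cylOf_antitone x hn hy)).le)

lemma tendsto_lintegral_sub_cylInf (hH : LowerSemicontinuous H) {ν : Measure (MarkovShift A)}
    (hint : ∫⁻ x, H x ∂ν ≠ ∞) (hfin : ∀ x, H x ≠ ∞) :
    Tendsto (fun m => ∫⁻ x, (H - cylInf H m) x ∂ν) atTop (𝓝 0) := by
  rw [← lintegral_zero (μ := ν)]
  refine tendsto_lintegral_of_dominated_convergence H
    (fun m => hH.measurable.sub (measurable_cylInf H m))
    (fun m => ae_of_all _ fun x => tsub_le_self) hint (ae_of_all _ fun x => ?_)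
  simpa using ENNReal.Tendsto.sub tendsto_const_nhds (tendsto_cylInf hH x) (Or.inl (hfin x))

end CylinderInfimum

section Eigenfunction

variable {p C : ℝ} {K k : ℕ} {h v : MarkovShift A → ℝ} {ν : Measure (MarkovShift A)}
  {G H : MarkovShift A → ℝ≥0∞}

lemma transfer_le_mul_transfer (hW : SatisfiesWalters φ) {n : ℕ} (hk : 1 ≤ k)
    (hG : ∀ x, ∀ y ∈ cylOf x n, G y = G x) {x y : MarkovShift A} (hxy : y ∈ cylOf x k) :
    transfer φ n G x ≤ ennexp (waltersSup φ k) * transfer φ n G y := by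
  have hsplice : ∀ z : {z : MarkovShift A // shift^[n] z = x}, z.1.1 n = y.1 0 := by
    rintro ⟨z, rfl⟩
    rw [hxy 0 hk, shift_iterate_apply, zero_add]
  choose T hTcyl hTy using fun z => exists_mem_cylOf_shift_iterate_eq (hsplice z)
  refine ennreal_tsum_le_mul_tsum_of_injective (T := fun z => ⟨T z, hTy z⟩)
    (fun z z' hzz' => Subtype.ext ?_) fun z => ?_
  · have hT : T z = T z' := congrArg Subtype.val hzz'
    refine eq_of_shift_iterate_eq (n := n) ?_ (z.2.trans z'.2.symm)
    rw [← cylOf_eq_of_mem (hTcyl z'), ← hT]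
    exact mem_cylOf_symm (hTcyl z)
  · have hTcyl' : T z ∈ cylOf z.1 (n + k) := mem_cylOf_add.2 ⟨hTcyl z, by rwa [hTy z, z.2]⟩
    rw [← mul_assoc, ← ennexp_add, hG _ _ (hTcyl z)]
    gcongr
    refine ennexp_le_ennexp.2 ?_
    linarith [(abs_le.1 (hW.abs_birkhoff_sub_le hk hTcyl')).1]

lemma pow_mul_sub_le_transfer_sub_cylInf (hW : SatisfiesWalters φ) (hk : 1 ≤ k)
    (hH : transfer φ 1 H = ennexp p • H) (m : ℕ) {x y : MarkovShift A} (hxy : y ∈ cylOf x k) :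
    ennexp p ^ m * (H y - ennexp (waltersSup φ k) * H x) ≤
      transfer φ m (H - cylInf H m) y := by
  have heigen : ∀ z, transfer φ m H z = ennexp p ^ m * H z := fun z => by
    rw [transfer_eq_pow_smul hH m]; rfl
  have hlow : transfer φ m (cylInf H m) y ≤
      ennexp (waltersSup φ k) * (ennexp p ^ m * H x) := by
    refine (transfer_le_mul_transfer hW hk (fun _ _ hz => cylInf_eq_of_mem H hz)
      (mem_cylOf_symm hxy)).trans ?_
    gcongr
    exact (transfer_mono φ m (cylInf_le H m) x).trans_eq (heigen x)
  rw [ENNReal.mul_sub fun _ _ => ENNReal.pow_ne_top (ennexp_ne_top p), tsub_le_iff_left]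
  calc ennexp p ^ m * H y = transfer φ m (cylInf H m) y + transfer φ m (H - cylInf H m) y := by
        rw [← heigen, ← Pi.add_apply, ← transfer_add, add_tsub_cancel_of_le (cylInf_le H m)]
    _ ≤ ennexp p ^ m * (ennexp (waltersSup φ k) * H x) + transfer φ m (H - cylInf H m) y := by
        rw [mul_left_comm]; gcongr

lemma IsConformal.le_mul_of_mem_cylOf (hν : IsConformal φ p ν) [ν.IsOpenPosMeasure]
    (hW : SatisfiesWalters φ) (hHcont : LowerSemicontinuous H) (hint : ∫⁻ x, H x ∂ν ≠ ∞)
    (hfin : ∀ x, H x ≠ ∞) (hH : transfer φ 1 H = ennexp p • H) (hk : 1 ≤ k)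
    {x y : MarkovShift A} (hxy : y ∈ cylOf x k) : H y ≤ ennexp (waltersSup φ k) * H x := by
  set q := ennexp (waltersSup φ k) * H x
  have hU : MeasurableSet (cylOf x k) := (isOpen_cylOf x k).measurableSet
  have hbound : ∀ m, ∫⁻ z in cylOf x k, (H z - q) ∂ν ≤ ∫⁻ z, (H - cylInf H m) z ∂ν := by
    intro m
    have hL : ennexp p ^ m ≠ ∞ := ENNReal.pow_ne_top (ennexp_ne_top p)
    rw [← ENNReal.mul_le_mul_iff_right (pow_ne_zero m (ennexp_ne_zero p)) hL,
      ← hν.lintegral_transfer hW.continuous.measurable m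
        (hHcont.measurable.sub (measurable_cylInf H m)), ← lintegral_const_mul' _ _ hL]
    exact (setLIntegral_mono' hU fun z hz =>
      pow_mul_sub_le_transfer_sub_cylInf hW hk hH m hz).trans (setLIntegral_le_lintegral _ _)
  have hzero : ∫⁻ z in cylOf x k, (H z - q) ∂ν = 0 :=
    le_antisymm (ge_of_tendsto' (tendsto_lintegral_sub_cylInf hHcont hint hfin) hbound) zero_le
  have hae : ∀ᵐ z ∂ν, z ∈ cylOf x k → H z - q = 0 := by
    rw [← ae_restrict_iff' hU]
    exact (lintegral_eq_zero_iff (hHcont.measurable.sub_const q)).1 hzero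
  have hempty : cylOf x k ∩ H ⁻¹' Set.Ioi q = ∅ := by
    refine ((isOpen_cylOf x k).inter (hHcont.isOpen_preimage q)).eq_empty_of_measure_zero
      (μ := ν) (measure_eq_zero_iff_ae_notMem.2 ?_)
    filter_upwards [hae] with z hz hzU
    exact hzU.2.not_ge (tsub_eq_zero_iff_le.1 (hz hzU.1))
  exact not_lt.1 fun hlt => (hempty.subset ⟨hxy, hlt⟩ : y ∈ (∅ : Set _))

lemma HasSpecification.transfer_one_le_mul_transfer (hf : HasSpecification φ K C) {q : ℝ≥0∞}
    (hH : ∀ z, ∀ z' ∈ cylOf z 1, H z ≤ q * H z') (x y : MarkovShift A) :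
    transfer φ 1 H x ≤ ennexp C * q * transfer φ (1 + K) H y := by
  choose T hTcyl hTy hTle using fun z => hf 1 one_pos z y
  refine ennreal_tsum_le_mul_tsum_of_injective
    (T := fun z : {z : MarkovShift A // shift^[1] z = x} => ⟨T z.1, hTy z.1⟩)
    (fun z z' hzz' => injective_apply_zero_fiber x ?_) fun z => ?_
  · have hletter : (T z.1).1 0 = (T z'.1).1 0 := congrArg (fun r => r.1.1 0) hzz'
    rwa [hTcyl z.1 0 one_pos, hTcyl z'.1 0 one_pos] at hletter
  · calc ennexp (birkhoff φ 1 z.1) * H z.1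
        ≤ ennexp (birkhoff φ (1 + K) (T z.1) + C) * (q * H (T z.1)) :=
          mul_le_mul' (ennexp_le_ennexp.2 (hTle z.1)) (hH _ _ (hTcyl z.1))
      _ = ennexp C * q * (ennexp (birkhoff φ (1 + K) (T z.1)) * H (T z.1)) := by
          rw [ennexp_add]; ring

lemma HasSpecification.le_add_of_transfer_eq (hf : HasSpecification φ K C) {w : ℝ}
    (hv : transfer φ 1 (fun x => ennexp (v x)) = ennexp p • fun x => ennexp (v x))
    (hw : ∀ z, ∀ z' ∈ cylOf z 1, v z ≤ w + v z') (x y : MarkovShift A) :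
    v x ≤ C + w + K * p + v y := by
  have hle := hf.transfer_one_le_mul_transfer (H := fun x => ennexp (v x)) (q := ennexp w)
    (fun z z' hz => by rw [← ennexp_add]; exact ennexp_le_ennexp.2 (hw z z' hz)) x y
  rw [hv, transfer_eq_pow_smul hv, Pi.smul_apply, Pi.smul_apply, smul_eq_mul, smul_eq_mul,
    ennexp_pow, ← ennexp_add, ← ennexp_add, ← ennexp_add, ← ennexp_add, ennexp_le_ennexp] at hle
  push_cast at hle
  linarith

lemma IsRPF.summable (hR : IsRPF φ p h ν) (x : MarkovShift A) :
    Summable fun z : {z : MarkovShift A // shift z = x} => Real.exp (φ z.1) * h z.1 := by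
  by_contra hns
  have heigen := hR.2.2.1 x
  rw [ruelle, tsum_eq_zero_of_not_summable hns] at heigen
  exact (mul_pos (Real.exp_pos p) (hR.2.1 x)).ne heigen

lemma IsRPF.transfer_ennexp_log (hR : IsRPF φ p h ν) :
    transfer φ 1 (fun x => ennexp (Real.log (h x))) =
      ennexp p • fun x => ennexp (Real.log (h x)) := by
  funext x
  simp only [Pi.smul_apply, ennexp_log (hR.2.1 _), transfer_one_apply, smul_eq_mul]
  simp only [ennexp, ← ENNReal.ofReal_mul (Real.exp_nonneg _)]
  rw [← hR.2.2.1 x, ruelle, ENNReal.ofReal_tsum_of_nonneg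
    (fun z => mul_nonneg (Real.exp_nonneg _) (hR.2.1 _).le) (hR.summable x)]

lemma IsRPF.lintegral_ennexp_log_ne_top (hR : IsRPF φ p h ν) :
    ∫⁻ x, ennexp (Real.log (h x)) ∂ν ≠ ∞ := by
  have hint : Integrable h ν := by
    by_contra hni
    exact zero_ne_one ((integral_undef hni).symm.trans hR.2.2.2.2.2)
  simpa only [ennexp_log (hR.2.1 _)] using hint.lintegral_lt_top.ne

lemma IsRPF.continuous_log (hR : IsRPF φ p h ν) : Continuous fun x => Real.log (h x) :=
  hR.1.log fun x => (hR.2.1 x).ne'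

lemma IsRPF.log_le_add_of_mem_cylOf (hR : IsRPF φ p h ν) (hW : SatisfiesWalters φ)
    (hν : IsConformal φ p ν) (hA : TopologicallyExact A) (hk : 1 ≤ k) {x y : MarkovShift A}
    (hxy : y ∈ cylOf x k) : Real.log (h y) ≤ waltersSup φ k + Real.log (h x) := by
  have hprob : IsProbabilityMeasure ν := hR.2.2.2.1
  have hopen := hν.isOpenPosMeasure hW.continuous.measurable hA (IsProbabilityMeasure.ne_zero ν)
  have hcont : Continuous fun x => ennexp (Real.log (h x)) :=
    ENNReal.continuous_ofReal.comp (Real.continuous_exp.comp hR.continuous_log)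
  rw [← ennexp_le_ennexp, ennexp_add]
  exact hν.le_mul_of_mem_cylOf hW hcont.lowerSemicontinuous hR.lintegral_ennexp_log_ne_top
    (fun x => ennexp_ne_top _) hR.transfer_ennexp_log hk hxy

end Eigenfunction

section MaximalAverage

variable {V : MarkovShift A → ℝ} {c C : ℝ} {K N : ℕ} {q : MarkovShift A}

/-- The uniform distribution on the first `N` points of the orbit of `q`; it is used when `q` has
period `N`. -/
noncomputable def orbitMeasure (N : ℕ) (q : MarkovShift A) : Measure (MarkovShift A) :=
  (N : ℝ≥0∞)⁻¹ • ∑ j ∈ Finset.range N, Measure.dirac (shift^[j] q)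

lemma map_shift_orbitMeasure (hq : shift^[N] q = q) :
    (orbitMeasure N q).map shift = orbitMeasure N q := by
  have hmap : ∀ j, (Measure.dirac (shift^[j] q)).map shift = Measure.dirac (shift^[j + 1] q) :=
    fun j => by rw [Measure.map_dirac' continuous_shift.measurable, Function.iterate_succ_apply']
  have hrotate : ∑ j ∈ Finset.range N, Measure.dirac (shift^[j + 1] q) =
      ∑ j ∈ Finset.range N, Measure.dirac (shift^[j] q) := by
    cases N with
    | zero => simp
    | succ N =>
      rw [Finset.sum_range_succ, hq, Finset.sum_range_succ' _ N, Function.iterate_zero_apply]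
  rw [orbitMeasure, Measure.map_smul, Measure.map_finset_sum continuous_shift.aemeasurable]
  simp only [hmap, hrotate]

lemma isInvariantProb_orbitMeasure (hN : 0 < N) (hq : shift^[N] q = q) :
    IsInvariantProb (orbitMeasure N q) := by
  refine ⟨⟨?_⟩, map_shift_orbitMeasure hq⟩
  simpa [orbitMeasure] using
    ENNReal.inv_mul_cancel (Nat.cast_ne_zero.2 hN.ne') (ENNReal.natCast_ne_top N)

lemma integrable_orbitMeasure (f : MarkovShift A → ℝ) (hN : 0 < N) (q : MarkovShift A) :
    Integrable f (orbitMeasure N q) :=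
  (integrable_finsetSum_measure.2 fun _ _ => integrable_dirac enorm_lt_top).smul_measure
    (ENNReal.inv_ne_top.2 (Nat.cast_ne_zero.2 hN.ne'))

lemma integral_orbitMeasure (f : MarkovShift A → ℝ) (N : ℕ) (q : MarkovShift A) :
    ∫ x, f x ∂orbitMeasure N q = (N : ℝ)⁻¹ * birkhoff f N q := by
  rw [orbitMeasure, integral_smul_measure,
    integral_finsetSum_measure fun _ _ => integrable_dirac enorm_lt_top]
  simp [birkhoff]

lemma IsInvariantProb.integral_le {μ : Measure (MarkovShift A)} (hμ : IsInvariantProb μ)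
    (hf : Integrable f μ) (hV : Continuous V) (hVb : BoundedFun V)
    (hsub : ∀ x, f x + V x - V (shift x) ≤ c) : ∫ x, f x ∂μ ≤ c := by
  obtain ⟨hprob, hmap⟩ := hμ
  obtain ⟨M, hM⟩ := hVb
  have hVint : Integrable V μ := .of_bound hV.aestronglyMeasurable M (ae_of_all _ hM)
  have hVint' : Integrable (fun x => V (shift x)) μ :=
    .of_bound (hV.comp continuous_shift).aestronglyMeasurable M (ae_of_all _ fun x => hM _)
  have hinv : ∫ x, V (shift x) ∂μ = ∫ x, V x ∂μ := by
    conv_rhs => rw [← hmap]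
    exact (integral_map continuous_shift.aemeasurable hV.aestronglyMeasurable).symm
  calc ∫ x, f x ∂μ = ∫ x, (f x + V x - V (shift x)) ∂μ := by
        rw [integral_sub (f := fun x => f x + V x) (hf.add hVint) hVint', integral_add hf hVint,
          hinv, add_sub_cancel_right]
    _ ≤ ∫ _, c ∂μ := integral_mono ((hf.add hVint).sub hVint') (integrable_const c) hsub
    _ = c := by simp

lemma exists_birkhoff_eq_of_calibrated
    (hcal : ∀ y, ∃ x, shift x = y ∧ f x + V x - V (shift x) = c) (n : ℕ) (y : MarkovShift A) :
    ∃ x, birkhoff f n x = n * c + V y - V x := by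
  suffices ∃ x, shift^[n] x = y ∧ birkhoff f n x = n * c + V y - V x from
    this.imp fun _ hx => hx.2
  induction n with
  | zero => exact ⟨y, rfl, by simp [birkhoff]⟩
  | succ n ih =>
    obtain ⟨z, hzy, hz⟩ := ih
    obtain ⟨x, rfl, hx⟩ := hcal z
    refine ⟨x, hzy, ?_⟩
    rw [birkhoff_succ, hz]
    push_cast
    linarith

lemma HasSpecification.exists_lt_integral [Nonempty (MarkovShift A)] (hf : HasSpecification f K C)
    (hW : SatisfiesWalters f) (hVb : BoundedFun V)
    (hcal : ∀ y, ∃ x, shift x = y ∧ f x + V x - V (shift x) = c) {w : ℝ} (hw : w < c) :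
    ∃ μ : Measure (MarkovShift A), IsInvariantProb μ ∧ Integrable f μ ∧ w < ∫ x, f x ∂μ := by
  obtain ⟨M, hM⟩ := hVb
  obtain ⟨m, hlarge, hm⟩ := (((tendsto_natCast_atTop_atTop.atTop_mul_const
    (sub_pos.2 hw)).eventually_gt_atTop (2 * M + (C + waltersSup f 1) + K * w)).and
    (eventually_gt_atTop 0)).exists
  let o : MarkovShift A := Classical.arbitrary _
  obtain ⟨x, hx⟩ := exists_birkhoff_eq_of_calibrated hcal m o
  obtain ⟨q, -, hq, hxq⟩ := hf.exists_periodic hW hm x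
  have hN : 0 < m + K := by omega
  refine ⟨orbitMeasure (m + K) q, isInvariantProb_orbitMeasure hN hq,
    integrable_orbitMeasure f hN q, ?_⟩
  rw [integral_orbitMeasure, lt_inv_mul_iff₀ (by exact_mod_cast hN)]
  push_cast
  linarith [(abs_le.1 (hM o)).1, (abs_le.1 (hM x)).2]

lemma HasSpecification.mf_eq [Nonempty (MarkovShift A)] (hf : HasSpecification f K C)
    (hW : SatisfiesWalters f) (hV : Continuous V) (hVb : BoundedFun V)
    (hsub : ∀ x, f x + V x - V (shift x) ≤ c)
    (hcal : ∀ y, ∃ x, shift x = y ∧ f x + V x - V (shift x) = c) : mf f = c := by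
  have hlt := fun w (hw : w < c) => hf.exists_lt_integral hW hVb hcal hw
  refine csSup_eq_of_forall_le_of_forall_lt_exists_gt ?_ ?_ fun w hw => ?_
  · obtain ⟨μ, hμ, hfμ, -⟩ := hlt (c - 1) (sub_one_lt c)
    exact ⟨_, μ, hμ, hfμ, rfl⟩
  · rintro _ ⟨μ, hμ, hfμ, rfl⟩
    exact hμ.integral_le hfμ hV hVb hsub
  · obtain ⟨μ, hμ, hfμ, hwμ⟩ := hlt w hw
    exact ⟨_, ⟨μ, hμ, hfμ, rfl⟩, hwμ⟩

end MaximalAverage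

section Laplace

lemma exists_nonneg_of_tsum_exp_mul_eq_one {ι κ : Type*} {l : Filter ι} [l.NeBot] {b : ι → ℝ}
    {s : ι → κ → ℝ} {t g : κ → ℝ} (hb : Tendsto b l atTop)
    (hs : ∀ z, Tendsto (fun i => s i z) l (𝓝 (t z))) (hg : Summable fun z => Real.exp (g z))
    (hsg : ∀ᶠ i in l, ∀ z, s i z ≤ g z)
    (hsum : ∀ᶠ i in l, ∑' z, Real.exp (b i * s i z) = 1) : ∃ z, 0 ≤ t z := by
  by_contra! hneg
  have hbound : ∀ᶠ i in l, ∀ z, ‖Real.exp (b i * s i z)‖ ≤ Real.exp (g z) := by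
    filter_upwards [hb.eventually_ge_atTop 1, hsg, hsum] with i hbi hsgi hsumi z
    have hsummable : Summable fun z => Real.exp (b i * s i z) := by
      by_contra hns
      exact zero_ne_one ((tsum_eq_zero_of_not_summable hns).symm.trans hsumi)
    have hterm : Real.exp (b i * s i z) ≤ 1 :=
      hsumi ▸ hsummable.le_tsum z fun _ _ => Real.exp_nonneg _
    have hnonpos : s i z ≤ 0 :=
      nonpos_of_mul_nonpos_right (Real.exp_le_one_iff.1 hterm) (one_pos.trans_le hbi)
    rw [Real.norm_eq_abs, Real.abs_exp, Real.exp_le_exp]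
    exact (mul_le_of_one_le_left hnonpos hbi).trans (hsgi z)
  have hlim : Tendsto (fun i => ∑' z, Real.exp (b i * s i z)) l (𝓝 (∑' _ : κ, 0)) :=
    tendsto_tsum_of_dominated_convergence hg
      (fun z => Real.tendsto_exp_atBot.comp (hb.atTop_mul_neg (hneg z) (hs z))) hbound
  rw [tsum_zero] at hlim
  exact zero_ne_one (tendsto_nhds_unique_of_eventuallyEq hlim tendsto_const_nhds hsum)

end Laplace

section ScaledLog

variable {p s β C : ℝ} {K k : ℕ} {h : MarkovShift A → ℝ} {ν : Measure (MarkovShift A)}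

/-- The rescaled logarithm `(1 / β) log h` of an eigenfunction `h` at inverse temperature `β`. -/
noncomputable def scaledLog (β : ℝ) (h : MarkovShift A → ℝ) (x : MarkovShift A) : ℝ :=
  1 / β * Real.log (h x)

lemma mul_scaledLog (hβ : β ≠ 0) (h : MarkovShift A → ℝ) (x : MarkovShift A) :
    β * scaledLog β h x = Real.log (h x) := by
  rw [scaledLog, ← mul_assoc, mul_one_div_cancel hβ, one_mul]

lemma IsRPF.tsum_exp_mul_scaledLog (hR : IsRPF (fun x => β * f x) p h ν) (hβ : β ≠ 0)
    (y : MarkovShift A) :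
    ∑' z : {z : MarkovShift A // shift z = y},
      Real.exp (β * (f z.1 + scaledLog β h z.1 - scaledLog β h y - p / β)) = 1 := by
  have hterm : ∀ z, Real.exp (β * (f z + scaledLog β h z - scaledLog β h y - p / β)) =
      Real.exp (β * f z) * h z / (Real.exp p * h y) := fun z => by
    rw [mul_sub, mul_sub, mul_add, mul_scaledLog hβ, mul_scaledLog hβ, mul_div_cancel₀ p hβ,
      sub_sub, Real.exp_sub, Real.exp_add, Real.exp_add, Real.exp_log (hR.2.1 z),
      Real.exp_log (hR.2.1 y), mul_comm (h y)]
  simp only [hterm]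
  rw [tsum_div_const, ← hR.2.2.1 y, ruelle]
  exact div_self ((hR.2.2.1 y).trans_ne (mul_pos (Real.exp_pos p) (hR.2.1 y)).ne')

lemma IsRPF.add_scaledLog_sub_le (hR : IsRPF (fun x => β * f x) p h ν) (hβ : 0 < β)
    (x : MarkovShift A) : f x + scaledLog β h x - scaledLog β h (shift x) ≤ p / β := by
  have hle := mul_le_transfer (fun x => β * f x) 1 (fun x => ennexp (Real.log (h x))) x
  rw [hR.transfer_ennexp_log, Pi.smul_apply, smul_eq_mul, ← ennexp_add, ← ennexp_add,
    ennexp_le_ennexp, birkhoff_one, Function.iterate_one, ← mul_scaledLog hβ.ne',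
    ← mul_scaledLog hβ.ne'] at hle
  rw [le_div_iff₀ hβ]
  linarith

lemma IsRPF.isConformal_const_mul (hR : IsRPF (fun x => β * f x) p h ν) (hβ : 1 ≤ β)
    (hW : SatisfiesWalters f) (hs : ∀ x, transfer f 1 1 x ≤ ennexp s) :
    IsConformal (fun x => β * f x) p ν :=
  hR.isConformal (hW.continuous.const_mul β).measurable (transfer_const_mul_one_le hs hβ)

lemma IsRPF.pressure_div_le (hR : IsRPF (fun x => β * f x) p h ν) (hβ : 1 ≤ β)
    (hW : SatisfiesWalters f) (hs : ∀ x, transfer f 1 1 x ≤ ennexp s) : p / β ≤ s := by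
  have hν : IsProbabilityMeasure ν := hR.2.2.2.1
  rw [div_le_iff₀' (one_pos.trans_le hβ)]
  exact (hR.isConformal_const_mul hβ hW hs).le_of_transfer_one_le (transfer_const_mul_one_le hs hβ)

lemma IsRPF.scaledLog_le_add (hR : IsRPF (fun x => β * f x) p h ν) (hβ : 1 ≤ β)
    (hA : TopologicallyExact A) (hW : SatisfiesWalters f)
    (hs : ∀ x, transfer f 1 1 x ≤ ennexp s) (hk : 1 ≤ k) {x y : MarkovShift A}
    (hxy : y ∈ cylOf x k) : scaledLog β h y ≤ waltersSup f k + scaledLog β h x := by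
  have hβ₀ : 0 < β := one_pos.trans_le hβ
  have hlog := hR.log_le_add_of_mem_cylOf (hW.const_mul hβ₀.le)
    (hR.isConformal_const_mul hβ hW hs) hA hk hxy
  rw [waltersSup_const_mul f hβ₀.le, ← mul_scaledLog hβ₀.ne', ← mul_scaledLog hβ₀.ne' h x,
    ← mul_add] at hlog
  exact le_of_mul_le_mul_left hlog hβ₀

lemma IsRPF.scaledLog_sub_le (hR : IsRPF (fun x => β * f x) p h ν) (hβ : 1 ≤ β)
    (hf : HasSpecification f K C) (hW : SatisfiesWalters f)
    (hs : ∀ x, transfer f 1 1 x ≤ ennexp s) (x y : MarkovShift A) :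
    scaledLog β h x - scaledLog β h y ≤ C + waltersSup f 1 + K * s := by
  have hβ₀ : 0 < β := one_pos.trans_le hβ
  have hlog := (hf.const_mul hβ₀.le).le_add_of_transfer_eq hR.transfer_ennexp_log
    (w := β * waltersSup f 1) (fun z z' hz => by
      rw [← waltersSup_const_mul f hβ₀.le]
      exact hR.log_le_add_of_mem_cylOf (hW.const_mul hβ₀.le)
        (hR.isConformal_const_mul hβ hW hs) hf.topologicallyExact le_rfl (mem_cylOf_symm hz)) x y
  have hp : K * p ≤ K * (β * s) := by
    gcongr
    exact (div_le_iff₀' hβ₀).1 (hR.pressure_div_le hβ hW hs)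
  rw [← mul_scaledLog hβ₀.ne', ← mul_scaledLog hβ₀.ne' h y] at hlog
  refine le_of_mul_le_mul_left ?_ hβ₀
  linarith

end ScaledLog

section ZeroTemperatureLimit

lemma continuous_of_le_waltersSup_add (hW : SatisfiesWalters f) {V : MarkovShift A → ℝ}
    (hV : ∀ k, 1 ≤ k → ∀ x, ∀ y ∈ cylOf x k, V y ≤ waltersSup f k + V x) : Continuous V := by
  refine continuous_of_forall_exists_cylOf fun ε hε => ?_
  obtain ⟨k, hk, hkε⟩ := hW.exists_waltersSup_lt hε
  refine ⟨k, fun x y hy => abs_lt.2 ⟨?_, ?_⟩⟩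
  · linarith [hV k hk y x (mem_cylOf_symm hy)]
  · linarith [hV k hk x y hy]

lemma boundedFun_of_sub_le {V : MarkovShift A → ℝ} {M : ℝ} (hV : ∀ x y, V x - V y ≤ M) :
    BoundedFun V := by
  rcases isEmpty_or_nonempty (MarkovShift A) with hempty | ⟨⟨o⟩⟩
  · exact ⟨0, isEmptyElim⟩
  · refine ⟨|V o| + M, fun x => abs_le.2 ⟨?_, ?_⟩⟩
    · linarith [hV o x, neg_abs_le (V o)]
    · linarith [hV x o, le_abs_self (V o)]

lemma summable_exp_of_transfer_one_ne_top {x : MarkovShift A} (hx : transfer f 1 1 x ≠ ∞) :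
    Summable fun z : {z : MarkovShift A // shift z = x} => Real.exp (f z.1) := by
  rw [transfer_one_apply] at hx
  simpa [ennexp, Real.exp_nonneg] using ENNReal.summable_toReal hx

variable {ι : Type*} {l : Filter ι} {C s : ℝ} {K : ℕ} {β p : ι → ℝ} {h : ι → MarkovShift A → ℝ}
  {ν : ι → Measure (MarkovShift A)} {V : MarkovShift A → ℝ}

lemma exists_le_add_limit_of_tendsto_pressure_div [l.NeBot] (hf : HasSpecification f K C)
    (hW : SatisfiesWalters f) (hs : ∀ x, transfer f 1 1 x ≤ ennexp s) (hβ : Tendsto β l atTop)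
    (hR : ∀ i, IsRPF (fun x => β i * f x) (p i) (h i) (ν i))
    (hconv : ∀ x, Tendsto (fun i => scaledLog (β i) (h i) x) l (𝓝 (V x))) {c : ℝ}
    (hc : Tendsto (fun i => p i / β i) l (𝓝 c)) (y : MarkovShift A) :
    ∃ x, shift x = y ∧ c ≤ f x + V x - V (shift x) := by
  have hβ₁ : ∀ᶠ i in l, 1 ≤ β i := hβ.eventually_ge_atTop 1
  set M := C + waltersSup f 1 + K * s - c + 1
  have hsummable : Summable fun z : {z : MarkovShift A // shift z = y} => Real.exp (M + f z.1) := by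
    simp only [Real.exp_add]
    exact (summable_exp_of_transfer_one_ne_top
      ((hs y).trans_lt (ennexp_ne_top s).lt_top).ne).mul_left _
  have hdom : ∀ᶠ i in l, ∀ z : {z : MarkovShift A // shift z = y},
      f z.1 + scaledLog (β i) (h i) z.1 - scaledLog (β i) (h i) y - p i / β i ≤ M + f z.1 := by
    filter_upwards [hβ₁, hc.eventually (lt_mem_nhds (sub_one_lt c))] with i hi hci z
    linarith [(hR i).scaledLog_sub_le hi hf hW hs z.1 y]
  obtain ⟨z, hz⟩ := exists_nonneg_of_tsum_exp_mul_eq_one hβ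
    (fun z : {z : MarkovShift A // shift z = y} =>
      ((tendsto_const_nhds.add (hconv z.1)).sub (hconv y)).sub hc) hsummable hdom
    (hβ₁.mono fun i hi => (hR i).tsum_exp_mul_scaledLog (one_pos.trans_le hi).ne' y)
  exact ⟨z.1, z.2, sub_nonneg.1 (by rwa [z.2])⟩

lemma exists_calibration_constant [l.NeBot] [Nonempty (MarkovShift A)]
    (hf : HasSpecification f K C) (hW : SatisfiesWalters f)
    (hs : ∀ x, transfer f 1 1 x ≤ ennexp s) (hβ : Tendsto β l atTop)
    (hR : ∀ i, IsRPF (fun x => β i * f x) (p i) (h i) (ν i))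
    (hconv : ∀ x, Tendsto (fun i => scaledLog (β i) (h i) x) l (𝓝 (V x))) :
    ∃ c, (∀ x, f x + V x - V (shift x) ≤ c) ∧
      ∀ y, ∃ x, shift x = y ∧ f x + V x - V (shift x) = c := by
  have hβ₁ : ∀ᶠ i in l, 1 ≤ β i := hβ.eventually_ge_atTop 1
  let o : MarkovShift A := Classical.arbitrary _
  have hmem : ∀ᶠ i in l, p i / β i ∈ Set.Icc (f o - (C + waltersSup f 1 + K * s)) s := by
    filter_upwards [hβ₁] with i hi
    refine ⟨?_, (hR i).pressure_div_le hi hW hs⟩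
    linarith [(hR i).add_scaledLog_sub_le (one_pos.trans_le hi) o,
      (hR i).scaledLog_sub_le hi hf hW hs (shift o) o]
  have hu : (Ultrafilter.of l : Filter ι) ≤ l := Ultrafilter.of_le l
  obtain ⟨c, -, hc⟩ := isCompact_Icc.ultrafilter_le_nhds'
    ((Ultrafilter.of l).map fun i => p i / β i) (hu hmem)
  have hsub : ∀ x, f x + V x - V (shift x) ≤ c := fun x =>
    le_of_tendsto_of_tendsto (((tendsto_const_nhds.add (hconv x)).sub (hconv (shift x))).mono_left
      hu) hc (hu (hβ₁.mono fun i hi => (hR i).add_scaledLog_sub_le (one_pos.trans_le hi) x))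
  refine ⟨c, hsub, fun y => ?_⟩
  obtain ⟨x, hx, hcx⟩ := exists_le_add_limit_of_tendsto_pressure_div hf hW hs (hβ.mono_left hu) hR
    (fun x => (hconv x).mono_left hu) hc y
  exact ⟨x, hx, (hsub x).antisymm hcx⟩

end ZeroTemperatureLimit

theorem limit_of_log_eigenfunctions_is_calibrated_subaction_general {ι : Type*} {l : Filter ι}
    [l.NeBot] (hA : FinitelyPrimitive A) (hW : SatisfiesWalters f) (hV₁ : Var1Finite f) {P : ℝ}
    (hP : HasGurevichPressure f P) {β p : ι → ℝ} {h : ι → MarkovShift A → ℝ}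
    {ν : ι → Measure (MarkovShift A)} (hβ : Tendsto β l atTop)
    (hR : ∀ i, IsRPF (fun x => β i * f x) (p i) (h i) (ν i)) {V : MarkovShift A → ℝ}
    (hconv : ∀ x, Tendsto (fun i => 1 / β i * Real.log (h i x)) l (𝓝 (V x))) :
    IsCalibratedSubaction f V := by
  rcases isEmpty_or_nonempty (MarkovShift A) with hempty | hne
  · exact ⟨continuous_of_const isEmptyElim, ⟨0, isEmptyElim⟩, isEmptyElim, isEmptyElim⟩
  obtain ⟨K, C, hf⟩ := hA.exists_hasSpecification hW hV₁
  obtain ⟨s, hs⟩ := hf.exists_transfer_one_le hW hne.some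
    ((hP _ ⟨hne.some, rfl⟩).1 (K + 2 + K) (by omega))
  have hβ₁ : ∀ᶠ i in l, 1 ≤ β i := hβ.eventually_ge_atTop 1
  have hVcont : Continuous V := continuous_of_le_waltersSup_add hW fun k hk x y hy =>
    le_of_tendsto_of_tendsto (hconv y) (tendsto_const_nhds.add (hconv x)) <| hβ₁.mono fun i hi =>
      (hR i).scaledLog_le_add hi hf.topologicallyExact hW hs hk hy
  have hVbdd : BoundedFun V := boundedFun_of_sub_le fun x y =>
    le_of_tendsto ((hconv x).sub (hconv y)) <| hβ₁.mono fun i hi =>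
      (hR i).scaledLog_sub_le hi hf hW hs x y
  obtain ⟨c, hsub, hcal⟩ := exists_calibration_constant hf hW hs hβ hR hconv
  obtain rfl : mf f = c := hf.mf_eq hW hVcont hVbdd hsub hcal
  exact ⟨hVcont, hVbdd, fun x => sub_nonpos.2 (hsub x),
    fun y => (hcal y).imp fun x hx => ⟨hx.1, sub_eq_zero.2 hx.2⟩⟩

/-- Any limit, uniform on compact sets, of `(1/β_i) log h_{β_i}` along a sequence
`β_i → ∞` is a bounded calibrated sub-action for `f`. -/
theorem limit_of_log_eigenfunctions_is_calibrated_subaction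
    (A : ℕ → ℕ → Bool)
    (hmix : TopologicallyMixing A)
    (hbip : FinitelyPrimitive A)
    (f : MarkovShift A → ℝ)
    (hWalters : SatisfiesWalters f)
    (hVar1 : Var1Finite f)
    (P : ℝ → ℝ)
    (hPfin : HasGurevichPressure f (P 1))
    (h : ℝ → MarkovShift A → ℝ)
    (ν : ℝ → Measure (MarkovShift A))
    (hRPF : ∀ β : ℝ, 0 < β → IsRPF (fun x => β * f x) (P β) (h β) (ν β))
    (βs : ℕ → ℝ) (hβpos : ∀ i, 0 < βs i) (hβtop : Tendsto βs atTop atTop)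
    (V : MarkovShift A → ℝ)
    (hconv : ∀ K : Set (MarkovShift A), IsCompact K →
      TendstoUniformlyOn (fun i x => (1 / βs i) * Real.log (h (βs i) x)) V atTop K) :
    IsCalibratedSubaction f V := by
  exact limit_of_log_eigenfunctions_is_calibrated_subaction_general hbip hWalters hVar1 hPfin hβtop
    (fun i => hRPF (βs i) (hβpos i))
    fun x => (hconv {x} isCompact_singleton).tendsto_at (Set.mem_singleton x)

end MarkovShift
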